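/- arXiv:1506.00311 — 2 statements merged into one kernel-verified Lean document; each statement's English description precedes it below -/
import Mathlib

section
/- Let k be a field and (K, b, B) a mixed complex over k. Then the connecting homomorphism δ : HH_n(K) → HC⁻_{n+1}(K) vanishes for every n if and only if there exists an isomorphism of graded k[u]-modules HC⁻_•(K) ≅ HH_•(K)[[u]], where HH_•(K)[[u]]_m := ∏_{j≥0} HH_{m+2j}(K) with u acting by the canonical shift dropping the j = 0 component, and u acts on HC⁻_•(K) by the map induced by multiplication by u on K[[u]]. -/
/-!
Isomorphism implies `δ = 0`: `u` is injective on `HH_•(K)[[u]]`, hence on `HC⁻_•(K)`. For a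
`b`-cycle `x` one has `(b + uB) x = u · Bx`, so `u ∘ δ = 0` and therefore `δ = 0`
(`delta_eq_zero_of_injective`).

`δ = 0` implies isomorphism: the long exact sequence breaks into short exact sequences
`0 → HC⁻_{n+2} → HC⁻ₙ → HHₙ → 0`, which split over the field `k`. Let `s` be a section of `p` and
`T` the retraction of `u` that kills the image of `s`, so that `x = s (p x) + u (T x)`
(`exists_splitting`). The map `x ↦ (p (Tʲ x))_j` is linear and commutes with `u` because
`T ∘ u = id`. It is bijective because `HC⁻_•(K)` is `u`-adically separated in the sense of
`eq_zero_of_divisible` and complete in the sense of `exists_expansion`. Both facts come from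
the chain level: for elements `y_j ∈ K[[u]]_{n+2j}` the recursion `z_j = y_j + u z_{j+1}` has a
unique solution, namely `z_j = ∑ᵢ uⁱ y_{j+i}` (`exists_sol`, `sol_eq_zero`); it is applied to
representing cycles, and to the primitives of their differences.
-/

universe u v

/-- A mixed complex `(K, b, B)` over a field `k`: a `ℤ`-graded `k`-vector space together
with a differential `b` of homological degree `-1` and a differential `B` of homological
degree `+1` such that `b ∘ b = 0`, `B ∘ B = 0` and `b ∘ B + B ∘ b = 0`. -/
structure MixedComplex (k : Type u) [Field k] where
  V : ℤ → Type v
  [acg : ∀ n, AddCommGroup (V n)]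
  [mod : ∀ n, Module k (V n)]
  b : ∀ n : ℤ, V n →ₗ[k] V (n - 1)
  B : ∀ n : ℤ, V n →ₗ[k] V (n + 1)
  b_sq : ∀ (n : ℤ) (x : V n), b (n - 1) (b n x) = 0
  B_sq : ∀ (n : ℤ) (x : V n), B (n + 1) (B n x) = 0
  anticomm : ∀ (n : ℤ) (x : V n),
    cast (congrArg V (by omega : n + 1 - 1 = n - 1 + 1)) (b (n + 1) (B n x))
      + B (n - 1) (b n x) = 0

attribute [instance] MixedComplex.acg MixedComplex.mod

namespace MixedComplex

variable {k : Type u} [Field k]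

/-- Transport along an equality of degrees, as a `k`-linear map. -/
def vcast (C : MixedComplex k) {n m : ℤ} (h : n = m) : C.V n →ₗ[k] C.V m where
  toFun x := cast (congrArg C.V h) x
  map_add' x y := by subst h; rfl
  map_smul' c x := by subst h; rfl

/-- The degree-`m` part of the negative cyclic complex `K[[u]]`:
`K[[u]]ₘ = ∏_{j ≥ 0} K_{m+2j}` (the `j`-th component is the coefficient of `uʲ`,
where `u` is a formal variable of homological degree `-2`). -/
abbrev NC (C : MixedComplex k) (m : ℤ) : Type v := ∀ j : ℕ, C.V (m + 2 * (j : ℤ))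

/-- The differential `b + uB` on the negative cyclic complex:
`(b + uB) (x_j)_j = (b x₀, b x₁ + B x₀, b x₂ + B x₁, …)`. -/
def nDfun (C : MixedComplex k) (m : ℤ) (x : C.NC m) :
    ∀ j : ℕ, C.V (m - 1 + 2 * (j : ℤ))
  | 0 => C.vcast (by omega) (C.b (m + 2 * ((0 : ℕ) : ℤ)) (x 0))
  | (j + 1) =>
      C.vcast (by push_cast; omega) (C.b (m + 2 * (((j + 1) : ℕ) : ℤ)) (x (j + 1)))
        + C.vcast (by push_cast; omega) (C.B (m + 2 * ((j : ℕ) : ℤ)) (x j))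

/-- The differential `b + uB : K[[u]]ₘ → K[[u]]_{m-1}` as a linear map. -/
def nD (C : MixedComplex k) (m : ℤ) : C.NC m →ₗ[k] C.NC (m - 1) where
  toFun := C.nDfun m
  map_add' x y := by
    funext j
    cases j with
    | zero => simp [nDfun]
    | succ j => simp only [nDfun, Pi.add_apply, map_add]; abel
  map_smul' c x := by
    funext j
    cases j with
    | zero => simp [nDfun]
    | succ j => simp only [nDfun, Pi.smul_apply, map_smul, RingHom.id_apply, smul_add]

/-- Multiplication by the formal variable `u` (of homological degree `-2`):
`u : K[[u]]_{m+2} → K[[u]]ₘ`, `(u x)₀ = 0`, `(u x)_{j+1} = x_j`. -/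
def nUfun (C : MixedComplex k) (m : ℤ) (x : C.NC (m + 2)) :
    ∀ j : ℕ, C.V (m + 2 * (j : ℤ))
  | 0 => 0
  | (j + 1) => C.vcast (by push_cast; omega) (x j)

/-- Multiplication by `u` as a linear map `K[[u]]_{m+2} → K[[u]]ₘ`. -/
def nU (C : MixedComplex k) (m : ℤ) : C.NC (m + 2) →ₗ[k] C.NC m where
  toFun := C.nUfun m
  map_add' x y := by
    funext j
    cases j with
    | zero => simp [nUfun]
    | succ j => simp [nUfun]
  map_smul' c x := by
    funext j
    cases j with
    | zero => simp [nUfun]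
    | succ j => simp [nUfun]

/-- The projection `p : K[[u]]ₘ → Kₘ` onto the `j = 0` component. -/
def nP (C : MixedComplex k) (m : ℤ) : C.NC m →ₗ[k] C.V m :=
  (C.vcast (by omega : m + 2 * ((0 : ℕ) : ℤ) = m)).comp
    (LinearMap.proj (R := k) (φ := fun j : ℕ => C.V (m + 2 * (j : ℤ))) 0)

/-- Transport along an equality of degrees for the negative cyclic complex. -/
def ncast (C : MixedComplex k) {n m : ℤ} (h : n = m) : C.NC n →ₗ[k] C.NC m := by
  subst h; exact LinearMap.id

end MixedComplex

namespace MixedComplex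

variable {k : Type u} [Field k]

@[simp] lemma vcast_rfl (C : MixedComplex k) {n : ℤ} (x : C.V n) :
    C.vcast rfl x = x := rfl

lemma vcast_vcast (C : MixedComplex k) {n m p : ℤ} (h : n = m) (h' : m = p) (x : C.V n) :
    C.vcast h' (C.vcast h x) = C.vcast (h.trans h') x := by subst h; subst h'; rfl

lemma b_vcast (C : MixedComplex k) {n m : ℤ} (h : n = m) (x : C.V n) :
    C.b m (C.vcast h x) = C.vcast (by rw [h]) (C.b n x) := by subst h; rfl

lemma B_vcast (C : MixedComplex k) {n m : ℤ} (h : n = m) (x : C.V n) :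
    C.B m (C.vcast h x) = C.vcast (by rw [h]) (C.B n x) := by subst h; rfl

lemma vcast_eq_zero_iff (C : MixedComplex k) {n m : ℤ} (h : n = m) (x : C.V n) :
    C.vcast h x = 0 ↔ x = 0 := by subst h; exact Iff.rfl

lemma ncast_apply (C : MixedComplex k) {n m : ℤ} (h : n = m) (x : C.NC n) (j : ℕ) :
    C.ncast h x j = C.vcast (by rw [h]) (x j) := by subst h; rfl

lemma anticomm' (C : MixedComplex k) (n : ℤ) (x : C.V n) :
    C.vcast (by omega : n + 1 - 1 = n - 1 + 1) (C.b (n + 1) (C.B n x)) =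
      - C.B (n - 1) (C.b n x) :=
  eq_neg_of_add_eq_zero_left (C.anticomm n x)

/-- Cycles of the negative cyclic complex in degree `n`. -/
def cyc (C : MixedComplex k) (n : ℤ) : Submodule k (C.NC n) := LinearMap.ker (C.nD n)

/-- Boundaries of the negative cyclic complex in degree `n`. -/
def bnd (C : MixedComplex k) (n : ℤ) : Submodule k (C.NC n) :=
  LinearMap.range ((C.ncast (by omega : n + 1 - 1 = n)).comp (C.nD (n + 1)))

/-- Negative cyclic homology `HC⁻ₙ(K) = Hₙ(K[[u]], b + uB)`. -/
abbrev HCneg (C : MixedComplex k) (n : ℤ) :=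
  C.cyc n ⧸ (C.bnd n).comap (C.cyc n).subtype

/-- Cycles of `(K, b)` in degree `n`. -/
def bcyc (C : MixedComplex k) (n : ℤ) : Submodule k (C.V n) := LinearMap.ker (C.b n)

/-- Boundaries of `(K, b)` in degree `n`. -/
def bbnd (C : MixedComplex k) (n : ℤ) : Submodule k (C.V n) :=
  LinearMap.range ((C.vcast (by omega : n + 1 - 1 = n)).comp (C.b (n + 1)))

/-- Hochschild homology `HHₙ(K) = Hₙ(K, b)`. -/
abbrev HH (C : MixedComplex k) (n : ℤ) :=
  C.bcyc n ⧸ (C.bbnd n).comap (C.bcyc n).subtype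

@[simp] lemma nD_apply (C : MixedComplex k) (m : ℤ) (x : C.NC m) :
    C.nD m x = C.nDfun m x := rfl

@[simp] lemma nU_apply (C : MixedComplex k) (m : ℤ) (x : C.NC (m + 2)) :
    C.nU m x = C.nUfun m x := rfl

@[simp] lemma nP_apply (C : MixedComplex k) (m : ℤ) (x : C.NC m) :
    C.nP m x = C.vcast (by omega) (x 0) := rfl

lemma uH_cycles (C : MixedComplex k) (n : ℤ) :
    ∀ x ∈ C.cyc (n + 2), C.nU n x ∈ C.cyc n := by
  intro x hx
  rw [cyc, LinearMap.mem_ker] at hx ⊢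
  funext j
  have hc : ∀ i : ℕ, C.nDfun (n + 2) x i = 0 := fun i => congrFun hx i
  cases j with
  | zero =>
    show C.nDfun n (C.nUfun n x) 0 = 0
    simp only [nDfun, nUfun, map_zero]
  | succ j =>
    show C.nDfun n (C.nUfun n x) (j + 1) = 0
    cases j with
    | zero =>
      have h0 := hc 0
      simp only [nDfun] at h0
      rw [vcast_eq_zero_iff] at h0
      simp only [nDfun, nUfun, map_zero, add_zero, b_vcast, vcast_vcast, h0]
    | succ j =>
      have h1 := hc (j + 1)
      simp only [nDfun] at h1
      show C.vcast _ (C.b _ (C.nUfun n x (j + 1 + 1))) +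
          C.vcast _ (C.B _ (C.nUfun n x (j + 1))) = 0
      simp only [nUfun, b_vcast, B_vcast, vcast_vcast]
      have h2 := congrArg (C.vcast (by push_cast; omega :
        n + 2 - 1 + 2 * ((j + 1 : ℕ) : ℤ) = n - 1 + 2 * ((j + 1 + 1 : ℕ) : ℤ))) h1
      rw [map_add, map_zero, vcast_vcast, vcast_vcast] at h2
      exact h2

end MixedComplex

namespace MixedComplex

variable {k : Type u} [Field k]

lemma uH_bounds (C : MixedComplex k) (n : ℤ) :
    ∀ x ∈ C.bnd (n + 2), C.nU n x ∈ C.bnd n := by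
  rintro x ⟨y, rfl⟩
  refine ⟨C.nU (n + 1) (C.ncast (by omega) y), ?_⟩
  funext j
  simp only [LinearMap.comp_apply, nD_apply, nU_apply, ncast_apply]
  cases j with
  | zero =>
      simp only [nDfun, nUfun, map_zero]
  | succ j =>
      cases j with
      | zero =>
          simp only [nDfun, nUfun, ncast_apply, b_vcast, B_vcast, vcast_vcast,
            map_zero, map_add, add_zero, zero_add]
      | succ j =>
          simp only [nDfun, nUfun, ncast_apply, b_vcast, B_vcast, vcast_vcast,
            map_zero, map_add, add_zero, zero_add]

lemma pH_cycles (C : MixedComplex k) (n : ℤ) :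
    ∀ x ∈ C.cyc n, C.nP n x ∈ C.bcyc n := by
  intro x hx
  rw [cyc, LinearMap.mem_ker] at hx
  rw [bcyc, LinearMap.mem_ker]
  have h0 : C.nDfun n x 0 = 0 := congrFun hx 0
  simp only [nDfun] at h0
  rw [vcast_eq_zero_iff] at h0
  simp only [nP_apply, b_vcast, h0, map_zero]

lemma pH_bounds (C : MixedComplex k) (n : ℤ) :
    ∀ x ∈ C.bnd n, C.nP n x ∈ C.bbnd n := by
  rintro x ⟨y, rfl⟩
  refine ⟨C.vcast (by push_cast; omega : n + 1 + 2 * ((0 : ℕ) : ℤ) = n + 1) (y 0), ?_⟩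
  simp only [LinearMap.comp_apply, nP_apply, nD_apply, ncast_apply, nDfun,
    b_vcast, vcast_vcast]

end MixedComplex

namespace MixedComplex

variable {k : Type u} [Field k]

/-- The inclusion `Kₙ → K[[u]]ₙ` in the `j = 0` component. -/
def inclFun (C : MixedComplex k) (n : ℤ) (x : C.V n) : ∀ j : ℕ, C.V (n + 2 * (j : ℤ))
  | 0 => C.vcast (by omega) x
  | (_ + 1) => 0

/-- The inclusion `Kₙ → K[[u]]ₙ` in the `j = 0` component, as a linear map. -/
def incl (C : MixedComplex k) (n : ℤ) : C.V n →ₗ[k] C.NC n where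
  toFun := C.inclFun n
  map_add' x y := by
    funext j
    cases j with
    | zero => simp [inclFun]
    | succ j => simp [inclFun]
  map_smul' c x := by
    funext j
    cases j with
    | zero => simp [inclFun]
    | succ j => simp [inclFun]

@[simp] lemma incl_apply (C : MixedComplex k) (n : ℤ) (x : C.V n) :
    C.incl n x = C.inclFun n x := rfl

lemma delta_cycles (C : MixedComplex k) (n : ℤ) :
    ∀ x ∈ C.bcyc n, C.incl (n + 1) (C.B n x) ∈ C.cyc (n + 1) := by
  intro x hx
  rw [bcyc, LinearMap.mem_ker] at hx
  rw [cyc, LinearMap.mem_ker]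
  have ha := C.anticomm' n x
  rw [hx, map_zero, neg_zero, vcast_eq_zero_iff] at ha
  funext j
  simp only [nD_apply, incl_apply, Pi.zero_apply]
  cases j with
  | zero =>
      simp only [nDfun, inclFun, b_vcast, vcast_vcast, ha, map_zero, Pi.zero_apply]
  | succ j =>
      cases j with
      | zero =>
          simp only [nDfun, inclFun, map_zero, zero_add, B_vcast, vcast_vcast,
            C.B_sq n x, Pi.zero_apply]
      | succ j =>
          simp only [nDfun, inclFun, map_zero, add_zero, Pi.zero_apply]

lemma delta_bounds (C : MixedComplex k) (n : ℤ) :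
    ∀ x ∈ C.bbnd n, C.incl (n + 1) (C.B n x) ∈ C.bnd (n + 1) := by
  rintro x ⟨y, rfl⟩
  refine ⟨-(C.incl (n + 1 + 1) (C.B (n + 1) y)), ?_⟩
  have hB : C.B (n + 1 - 1) (C.b (n + 1) y) =
      - C.vcast (by omega : n + 1 + 1 - 1 = n + 1 - 1 + 1)
        (C.b (n + 1 + 1) (C.B (n + 1) y)) :=
    eq_neg_of_add_eq_zero_right (C.anticomm (n + 1) y)
  funext j
  simp only [LinearMap.comp_apply, map_neg, ncast_apply, nD_apply, incl_apply,
    Pi.neg_apply, Pi.zero_apply]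
  cases j with
  | zero =>
      simp only [nDfun, inclFun, b_vcast, B_vcast, vcast_vcast, hB, map_neg,
        vcast_vcast, neg_neg, map_zero, Pi.zero_apply, Pi.neg_apply]
  | succ j =>
      cases j with
      | zero =>
          simp only [nDfun, inclFun, map_zero, zero_add, B_vcast, vcast_vcast,
            C.B_sq (n + 1) y, neg_zero, Pi.zero_apply, Pi.neg_apply]
      | succ j =>
          simp only [nDfun, inclFun, map_zero, add_zero, neg_zero, Pi.zero_apply, Pi.neg_apply]

end MixedComplex

namespace MixedComplex

variable {k : Type u} [Field k]

/-- A linear map carrying cycles to cycles and boundaries to boundaries induces a map on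
subquotient homology. -/
def inducedQ {M N : Type v} [AddCommGroup M] [Module k M] [AddCommGroup N] [Module k N]
    (Z Bd : Submodule k M) (Z' Bd' : Submodule k N) (f : M →ₗ[k] N)
    (h1 : ∀ x ∈ Z, f x ∈ Z') (h2 : ∀ x ∈ Bd, f x ∈ Bd') :
    (Z ⧸ Bd.comap Z.subtype) →ₗ[k] (Z' ⧸ Bd'.comap Z'.subtype) :=
  Submodule.mapQ _ _ (f.restrict h1) (by
    intro x hx
    simp only [Submodule.mem_comap, Submodule.coe_subtype, LinearMap.restrict_apply] at hx ⊢
    exact h2 _ hx)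

/-- The map `u : HC⁻_{n+2}(K) → HC⁻ₙ(K)` induced by multiplication by `u`. -/
def uH (C : MixedComplex k) (n : ℤ) : C.HCneg (n + 2) →ₗ[k] C.HCneg n :=
  inducedQ (C.cyc (n + 2)) (C.bnd (n + 2)) (C.cyc n) (C.bnd n) (C.nU n)
    (C.uH_cycles n) (C.uH_bounds n)

/-- The map `p : HC⁻ₙ(K) → HHₙ(K)` induced by the projection onto the `j = 0`
component. -/
def pH (C : MixedComplex k) (n : ℤ) : C.HCneg n →ₗ[k] C.HH n :=
  inducedQ (C.cyc n) (C.bnd n) (C.bcyc n) (C.bbnd n) (C.nP n)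
    (C.pH_cycles n) (C.pH_bounds n)

/-- The connecting homomorphism `δ : HHₙ(K) → HC⁻_{n+1}(K)` of the short exact sequence
`0 → K[[u]][-2] →(u) K[[u]] →(p) (K, b) → 0`: on a cycle `x ∈ Kₙ` it is obtained by
lifting `x` to `(x, 0, 0, …) ∈ K[[u]]ₙ`, applying `b + uB` (which gives
`u · (Bx, 0, 0, …)`) and dividing by `u`; hence it is induced by `x ↦ (Bx, 0, 0, …)`. -/
def delta (C : MixedComplex k) (n : ℤ) : C.HH n →ₗ[k] C.HCneg (n + 1) :=
  inducedQ (C.bcyc n) (C.bbnd n) (C.cyc (n + 1)) (C.bnd (n + 1))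
    ((C.incl (n + 1)).comp (C.B n)) (C.delta_cycles n) (C.delta_bounds n)

/-- Transport along an equality of degrees for negative cyclic homology. -/
def hccast (C : MixedComplex k) {n m : ℤ} (h : n = m) : C.HCneg n →ₗ[k] C.HCneg m := by
  subst h; exact LinearMap.id

end MixedComplex

namespace MixedComplex

variable {k : Type u} [Field k]

/-- Transport along an equality of degrees for Hochschild homology. -/
def hhcast (C : MixedComplex k) {n m : ℤ} (h : n = m) : C.HH n →ₗ[k] C.HH m := by
  subst h; exact LinearMap.id

/-- The degree-`m` part of the graded `k[u]`-module `HH_•(K)[[u]]`: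
`(HH_•(K)[[u]])ₘ = ∏_{j ≥ 0} HH_{m+2j}(K)`. -/
abbrev HHgr (C : MixedComplex k) (m : ℤ) := ∀ j : ℕ, C.HH (m + 2 * (j : ℤ))

/-- The action of `u` on `HH_•(K)[[u]]`: the canonical shift dropping the `j = 0`
component, `u : (HH_•(K)[[u]])_{m+2} → (HH_•(K)[[u]])ₘ`. -/
def uHHfun (C : MixedComplex k) (m : ℤ) (x : C.HHgr (m + 2)) :
    ∀ j : ℕ, C.HH (m + 2 * (j : ℤ))
  | 0 => 0
  | (j + 1) => C.hhcast (by push_cast; omega) (x j)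

/-- The action of `u` on `HH_•(K)[[u]]` as a linear map. -/
def uHHgr (C : MixedComplex k) (m : ℤ) : C.HHgr (m + 2) →ₗ[k] C.HHgr m where
  toFun := C.uHHfun m
  map_add' x y := by
    funext j
    cases j with
    | zero => simp [uHHfun]
    | succ j => simp [uHHfun]
  map_smul' c x := by
    funext j
    cases j with
    | zero => simp [uHHfun]
    | succ j => simp [uHHfun]

end MixedComplex

namespace MixedComplex

variable {k : Type u} [Field k]

/-! ### The differential and multiplication by `u` with free degrees -/

/-- The differential `b + uB : K[[u]]ₙ → K[[u]]ₘ` for any `n`, `m` with `n = m + 1`; keeping the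
equality of degrees as an argument makes identities between composites free of casts. -/
def dd (C : MixedComplex k) {n m : ℤ} (h : n = m + 1) : C.NC n →ₗ[k] C.NC m :=
  (C.ncast (by omega : n - 1 = m)).comp (C.nD n)

/-- Multiplication by `u` as a map `K[[u]]ₙ → K[[u]]ₘ` for any `n`, `m` with `n = m + 2`. -/
def uu (C : MixedComplex k) {n m : ℤ} (h : n = m + 2) : C.NC n →ₗ[k] C.NC m :=
  (C.nU m).comp (C.ncast h)

lemma uu_zero (C : MixedComplex k) {n m : ℤ} (h : n = m + 2) (x : C.NC n) :
    C.uu h x 0 = 0 := rfl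

lemma uu_succ (C : MixedComplex k) {n m : ℤ} (h : n = m + 2) (x : C.NC n) (j : ℕ) :
    C.uu h x (j + 1) = C.vcast (by push_cast; omega) (x j) := by
  subst h; rfl

lemma dd_zero (C : MixedComplex k) {n m : ℤ} (h : n = m + 1) (x : C.NC n) :
    C.dd h x 0 = C.vcast (by omega) (C.b _ (x 0)) := by
  simp only [dd, LinearMap.comp_apply, nD_apply, ncast_apply, nDfun, vcast_vcast]

lemma dd_succ (C : MixedComplex k) {n m : ℤ} (h : n = m + 1) (x : C.NC n) (j : ℕ) :
    C.dd h x (j + 1) = C.vcast (by push_cast; omega) (C.b _ (x (j + 1)))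
      + C.vcast (by push_cast; omega) (C.B _ (x j)) := by
  simp only [dd, LinearMap.comp_apply, nD_apply, ncast_apply, nDfun, vcast_vcast, map_add]

lemma dd_uu (C : MixedComplex k) {a b c d : ℤ} (h₁ : a = b + 2) (h₂ : b = c + 1)
    (h₃ : a = d + 1) (h₄ : d = c + 2) (x : C.NC a) :
    C.dd h₂ (C.uu h₁ x) = C.uu h₄ (C.dd h₃ x) := by
  funext j
  match j with
  | 0 => simp only [dd_zero, uu_zero, map_zero]
  | 1 =>
    rw [dd_succ, uu_succ, uu_succ, uu_zero, dd_zero]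
    simp only [map_zero, add_zero, b_vcast, vcast_vcast]
  | j + 2 =>
    rw [dd_succ, uu_succ, uu_succ, uu_succ, dd_succ]
    simp only [b_vcast, B_vcast, vcast_vcast, map_add]

lemma dd_dd (C : MixedComplex k) {a b c : ℤ} (h₁ : a = b + 1) (h₂ : b = c + 1) (x : C.NC a) :
    C.dd h₂ (C.dd h₁ x) = 0 := by
  funext j
  have key : ∀ {n p : ℤ} (y : C.V n) (h : n + 1 - 1 = p) (h' : n - 1 + 1 = p),
      C.vcast h (C.b (n + 1) (C.B n y)) + C.vcast h' (C.B (n - 1) (C.b n y)) = 0 := by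
    intro n p y h h'
    subst h'
    exact C.anticomm n y
  match j with
  | 0 => rw [dd_zero, dd_zero, b_vcast, b_sq, map_zero, map_zero]; rfl
  | 1 =>
    rw [dd_succ, dd_succ, dd_zero]
    simp only [map_add, b_vcast, B_vcast, b_sq, map_zero, zero_add, vcast_vcast]
    exact key _ _ _
  | j + 2 =>
    rw [dd_succ, dd_succ, dd_succ]
    simp only [map_add, b_vcast, B_vcast, b_sq, B_sq, map_zero, zero_add, add_zero, vcast_vcast]
    rw [key]
    rfl

lemma vcast_injective (C : MixedComplex k) {n m : ℤ} (h : n = m) :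
    Function.Injective (C.vcast h) := by
  subst h; exact fun _ _ h => h

lemma uu_injective (C : MixedComplex k) {n m : ℤ} (h : n = m + 2) :
    Function.Injective (C.uu h) := by
  intro x y hxy
  funext j
  have := congrFun hxy (j + 1)
  rw [uu_succ, uu_succ] at this
  exact C.vcast_injective _ this

lemma exists_uu_of_zero (C : MixedComplex k) {n m : ℤ} (h : n = m + 2) (x : C.NC m)
    (hx : x 0 = 0) : ∃ y : C.NC n, C.uu h y = x := by
  refine ⟨fun j => C.vcast (by push_cast; omega) (x (j + 1)), ?_⟩
  funext j
  cases j with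
  | zero => rw [uu_zero, hx]
  | succ j => rw [uu_succ, vcast_vcast]; rfl

lemma incl_zero (C : MixedComplex k) (n : ℤ) (x : C.V n) :
    C.incl n x 0 = C.vcast (by omega) x := rfl

lemma incl_succ (C : MixedComplex k) (n : ℤ) (x : C.V n) (j : ℕ) :
    C.incl n x (j + 1) = 0 := rfl

/-- On a `b`-cycle `x`, the total differential is `(b + uB) x = u · Bx`. -/
lemma dd_incl (C : MixedComplex k) {n m : ℤ} (h : n = m + 1) (x : C.V n) (hx : C.b n x = 0) :
    C.dd h (C.incl n x) = C.uu (by omega) (C.incl (n + 1) (C.B n x)) := by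
  funext j
  match j with
  | 0 => rw [dd_zero, uu_zero, incl_zero, b_vcast, hx, map_zero, map_zero]
  | 1 =>
    rw [dd_succ, uu_succ, incl_succ, incl_zero, incl_zero, B_vcast, map_zero, map_zero, zero_add,
      vcast_vcast, vcast_vcast]
  | j + 2 =>
    rw [dd_succ, uu_succ, incl_succ, incl_succ, incl_succ]
    simp only [map_zero, add_zero]

/-! ### `u`-adic completeness and separatedness of `K[[u]]` -/

/-- The `i`-th coefficient of the solution `z` of `z a = y a + u · z (next a)`, that is, of
`∑ j, uʲ · y (nextʲ a)`, where `a` ranges over a graded family `A` and `y a` has degree `f n`. -/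
def solFun (C : MixedComplex k) {A : ℤ → Type*} (next : ∀ n, A n → A (n + 2))
    (f : ℤ → ℤ) (hf : ∀ n, f (n + 2) = f n + 2) (y : ∀ n, A n → C.NC (f n)) :
    ∀ (i : ℕ) (n : ℤ), A n → C.V (f n + 2 * (i : ℤ))
  | 0, n, a => y n a 0
  | i + 1, n, a => y n a (i + 1) +
      C.vcast (by have := hf n; push_cast; omega) (solFun C next f hf y i (n + 2) (next n a))

lemma exists_sol (C : MixedComplex k) {A : ℤ → Type*} (next : ∀ n, A n → A (n + 2))
    (f : ℤ → ℤ) (hf : ∀ n, f (n + 2) = f n + 2) (y : ∀ n, A n → C.NC (f n)) :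
    ∃ z : ∀ n, A n → C.NC (f n),
      ∀ n a, z n a = y n a + C.uu (hf n) (z (n + 2) (next n a)) := by
  refine ⟨fun n a i => C.solFun next f hf y i n a, fun n a => ?_⟩
  funext i
  cases i with
  | zero => rw [Pi.add_apply, uu_zero, add_zero]; rfl
  | succ i => rw [Pi.add_apply, uu_succ]; rfl

lemma sol_eq_zero (C : MixedComplex k) {A : ℤ → Type*} (next : ∀ n, A n → A (n + 2))
    (f : ℤ → ℤ) (hf : ∀ n, f (n + 2) = f n + 2) (z : ∀ n, A n → C.NC (f n))
    (hz : ∀ n a, z n a = C.uu (hf n) (z (n + 2) (next n a))) (n : ℤ) (a : A n) :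
    z n a = 0 := by
  have key : ∀ (i : ℕ) (n : ℤ) (a : A n), z n a i = 0 := by
    intro i
    induction i with
    | zero => intro n a; rw [hz, uu_zero]
    | succ i ih => intro n a; rw [hz, uu_succ, ih, map_zero]
  funext i
  exact key i n a

/-! ### Homology classes and exactness -/

lemma mem_cyc (C : MixedComplex k) {n m : ℤ} (h : n = m + 1) (x : C.NC n) :
    x ∈ C.cyc n ↔ C.dd h x = 0 := by
  obtain rfl : m = n - 1 := by omega
  exact Iff.rfl

/-- The class in `HC⁻ₙ(K)` of a cycle. -/
def cls (C : MixedComplex k) {n : ℤ} (z : C.NC n) (hz : z ∈ C.cyc n) : C.HCneg n :=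
  Submodule.Quotient.mk ⟨z, hz⟩

/-- The class in `HHₙ(K)` of a `b`-cycle. -/
def hcls (C : MixedComplex k) {n : ℤ} (z : C.V n) (hz : z ∈ C.bcyc n) : C.HH n :=
  Submodule.Quotient.mk ⟨z, hz⟩

lemma exists_cls (C : MixedComplex k) {n : ℤ} (x : C.HCneg n) :
    ∃ z hz, C.cls (n := n) z hz = x := by
  obtain ⟨⟨z, hz⟩, rfl⟩ := Submodule.Quotient.mk_surjective _ x
  exact ⟨z, hz, rfl⟩

lemma exists_hcls (C : MixedComplex k) {n : ℤ} (x : C.HH n) :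
    ∃ z hz, C.hcls (n := n) z hz = x := by
  obtain ⟨⟨z, hz⟩, rfl⟩ := Submodule.Quotient.mk_surjective _ x
  exact ⟨z, hz, rfl⟩

lemma cls_eq_zero (C : MixedComplex k) {n : ℤ} (z : C.NC n) (hz : z ∈ C.cyc n) :
    C.cls z hz = 0 ↔ ∃ w : C.NC (n + 1), C.dd rfl w = z :=
  (Submodule.Quotient.mk_eq_zero _).trans Iff.rfl

lemma cls_eq (C : MixedComplex k) {n : ℤ} (z : C.NC n) (hz : z ∈ C.cyc n)
    (z' : C.NC n) (hz' : z' ∈ C.cyc n) :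
    C.cls z hz = C.cls z' hz' ↔ ∃ w : C.NC (n + 1), C.dd rfl w = z - z' :=
  (Submodule.Quotient.eq _).trans Iff.rfl

lemma hcls_eq_zero (C : MixedComplex k) {n : ℤ} (z : C.V n) (hz : z ∈ C.bcyc n) :
    C.hcls z hz = 0 ↔ ∃ w : C.V (n + 1), C.vcast (by omega) (C.b _ w) = z :=
  (Submodule.Quotient.mk_eq_zero _).trans Iff.rfl

lemma uu_mem (C : MixedComplex k) {n : ℤ} {z : C.NC (n + 2)} (hz : z ∈ C.cyc (n + 2)) :
    C.uu rfl z ∈ C.cyc n := C.uH_cycles n z hz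

lemma uH_cls (C : MixedComplex k) {n : ℤ} (z : C.NC (n + 2)) (hz : z ∈ C.cyc (n + 2)) :
    C.uH n (C.cls z hz) = C.cls (C.uu rfl z) (C.uu_mem hz) := rfl

lemma pH_cls (C : MixedComplex k) {n : ℤ} (z : C.NC n) (hz : z ∈ C.cyc n) :
    C.pH n (C.cls z hz) = C.hcls (C.nP n z) (C.pH_cycles n z hz) := rfl

lemma delta_hcls (C : MixedComplex k) {n : ℤ} (z : C.V n) (hz : z ∈ C.bcyc n) :
    C.delta n (C.hcls z hz) = C.cls (C.incl (n + 1) (C.B n z)) (C.delta_cycles n z hz) := rfl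

lemma pH_uH (C : MixedComplex k) {n : ℤ} (x : C.HCneg (n + 2)) : C.pH n (C.uH n x) = 0 := by
  obtain ⟨z, hz, rfl⟩ := C.exists_cls x
  rw [uH_cls, pH_cls, hcls_eq_zero]
  refine ⟨0, ?_⟩
  rw [nP_apply, uu_zero, map_zero, map_zero, map_zero]

lemma exists_uH_of_pH_eq_zero (C : MixedComplex k) {n : ℤ} (x : C.HCneg n)
    (hx : C.pH n x = 0) : ∃ y, C.uH n y = x := by
  obtain ⟨z, hz, rfl⟩ := C.exists_cls x
  rw [pH_cls, hcls_eq_zero] at hx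
  obtain ⟨w, hw⟩ := hx
  -- subtracting the boundary of a primitive of the constant term makes `z` divisible by `u`
  have h0 : (z - C.dd rfl (C.incl (n + 1) w)) 0 = 0 := by
    apply C.vcast_injective (by omega : n + 2 * ((0 : ℕ) : ℤ) = n)
    rw [nP_apply] at hw
    rw [Pi.sub_apply, dd_zero, incl_zero, map_sub, ← hw, b_vcast, vcast_vcast, vcast_vcast,
      map_zero, sub_self]
  obtain ⟨y, hy⟩ := C.exists_uu_of_zero rfl _ h0
  have hyc : y ∈ C.cyc (n + 2) := by
    rw [C.mem_cyc (by omega : n + 2 = n + 1 + 1)]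
    apply C.uu_injective (by omega : n + 1 = n - 1 + 2)
    rw [← C.dd_uu rfl (by omega), hy, map_sub, dd_dd, map_zero, sub_zero]
    exact (C.mem_cyc _ _).1 hz
  refine ⟨C.cls y hyc, ?_⟩
  rw [uH_cls, cls_eq]
  exact ⟨-C.incl (n + 1) w, by rw [hy, map_neg]; abel⟩

lemma bounds_of_uu (C : MixedComplex k) {a m : ℤ} (h : a = m + 2)
    (hu : Function.Injective (C.uH m)) (z : C.NC a) (hz : z ∈ C.cyc a)
    (hw : ∃ w : C.NC (m + 1), C.dd rfl w = C.uu h z) : ∃ w : C.NC (a + 1), C.dd rfl w = z := by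
  subst h
  rw [← C.cls_eq_zero z hz]
  apply hu
  rw [map_zero, uH_cls, cls_eq_zero]
  exact hw

/-- Since `u ∘ δ = 0`, injectivity of `u` on `HC⁻_•(K)` forces `δ = 0`. -/
lemma delta_eq_zero_of_injective (C : MixedComplex k)
    (hu : ∀ n, Function.Injective (C.uH n)) (n : ℤ) : C.delta n = 0 := by
  refine LinearMap.ext fun x => ?_
  obtain ⟨z, hz, rfl⟩ := C.exists_hcls x
  rw [delta_hcls, LinearMap.zero_apply, cls_eq_zero]
  refine C.bounds_of_uu (by omega : n + 1 = n - 1 + 2) (hu _) _ (C.delta_cycles n z hz) ?_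
  have hd := C.dd_incl (by omega : n = n - 1 + 1) z hz
  rw [← hd]
  obtain ⟨m, rfl⟩ : ∃ m, n = m + 1 := ⟨n - 1, by omega⟩
  have aux : ∀ {p : ℤ} (h : m + 1 = p + 1) (x : C.NC (m + 1)),
      ∃ w : C.NC (p + 1), C.dd rfl w = C.dd h x := by
    intro p h x
    obtain rfl : m = p := by omega
    exact ⟨x, rfl⟩
  exact aux _ _

lemma exists_delta_primitive (C : MixedComplex k) (hδ : ∀ n, C.delta n = 0) {n : ℤ} (x : C.V n)
    (hx : C.b n x = 0) : ∃ v : C.NC (n + 1 + 1), C.dd rfl v = C.incl (n + 1) (C.B n x) := by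
  rw [← C.cls_eq_zero _ (C.delta_cycles n x hx), ← C.delta_hcls _ hx, hδ]
  rfl

lemma uH_injective (C : MixedComplex k) (hδ : ∀ n, C.delta n = 0) (n : ℤ) :
    Function.Injective (C.uH n) := by
  rw [injective_iff_map_eq_zero]
  intro x hx
  obtain ⟨z, hz, rfl⟩ := C.exists_cls x
  rw [uH_cls, cls_eq_zero] at hx
  obtain ⟨w, hw⟩ := hx
  -- the constant term of a primitive `w` of `u z` is a `b`-cycle `w₀`, and `z - δ(w₀)` is exact
  have hb : C.b (n + 1) (C.nP (n + 1) w) = 0 := by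
    have h0 := congrFun hw 0
    rw [dd_zero, uu_zero, vcast_eq_zero_iff] at h0
    rw [nP_apply, b_vcast, h0, map_zero]
  obtain ⟨w', hw'⟩ := C.exists_uu_of_zero (by omega : n + 2 + 1 = n + 1 + 2)
    (w - C.incl (n + 1) (C.nP (n + 1) w)) (by
      rw [Pi.sub_apply, incl_zero, nP_apply, vcast_vcast, vcast_rfl, sub_self])
  obtain ⟨v, hv⟩ := C.exists_delta_primitive hδ _ hb
  have aux : ∀ {a a' m : ℤ} (h : a = m + 2) (h' : a' = m + 2) (v : C.NC (a + 1)),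
      ∃ v' : C.NC (a' + 1), C.uu h (C.dd rfl v) = C.uu h' (C.dd rfl v') := by
    intro a a' m h h' v
    subst h
    subst h'
    exact ⟨v, rfl⟩
  obtain ⟨v', hv'⟩ := aux (by omega : n + 1 + 1 = n + 2) rfl v
  rw [cls_eq_zero]
  refine ⟨v' + w', C.uu_injective rfl ?_⟩
  rw [map_add, map_add, ← hv', hv, ← C.dd_uu (by omega) rfl rfl rfl, hw', ← hw,
    ← C.dd_incl rfl _ hb, ← map_add]
  congr 1
  abel

lemma pH_surjective (C : MixedComplex k) (hδ : ∀ n, C.delta n = 0) (n : ℤ) :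
    Function.Surjective (C.pH n) := by
  intro h
  obtain ⟨x, hx, rfl⟩ := C.exists_hcls h
  obtain ⟨v, hv⟩ := C.exists_delta_primitive hδ x hx
  -- if `Bx = (b + uB) v`, then `x - u v` is a cycle lifting `x`
  have hz : C.incl n x - C.uu (by omega) v ∈ C.cyc n := by
    rw [C.mem_cyc (by omega : n = n - 1 + 1), map_sub, C.dd_incl _ x hx,
      C.dd_uu _ _ rfl (by omega), hv, sub_self]
  refine ⟨C.cls _ hz, ?_⟩
  rw [pH_cls]
  congr 1
  rw [nP_apply, Pi.sub_apply, uu_zero, sub_zero, incl_zero, vcast_vcast, vcast_rfl]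

/-- If `δ = 0`, the short exact sequences `0 → HC⁻_{n+2} → HC⁻ₙ → HHₙ → 0` split linearly:
`s` is a section of `p`, and `T` is the retraction of `u` with kernel the image of `s`. -/
lemma exists_splitting (C : MixedComplex k) (hδ : ∀ n, C.delta n = 0) (n : ℤ) :
    ∃ (s : C.HH n →ₗ[k] C.HCneg n) (T : C.HCneg n →ₗ[k] C.HCneg (n + 2)),
      (∀ h, C.pH n (s h) = h) ∧ (∀ h, T (s h) = 0) ∧ (∀ y, T (C.uH n y) = y) ∧
      ∀ x, x = s (C.pH n x) + C.uH n (T x) := by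
  obtain ⟨s, hs⟩ := (C.pH n).exists_rightInverse_of_surjective
    (LinearMap.range_eq_top.2 (C.pH_surjective hδ n))
  obtain ⟨r, hr⟩ := (C.uH n).exists_leftInverse_of_injective
    (LinearMap.ker_eq_bot.2 (C.uH_injective hδ n))
  have hs' : ∀ h, C.pH n (s h) = h := fun h => LinearMap.congr_fun hs h
  have hr' : ∀ y, r (C.uH n y) = y := fun y => LinearMap.congr_fun hr y
  refine ⟨s, r.comp (LinearMap.id - s.comp (C.pH n)), hs', fun h => ?_, fun y => ?_, fun x => ?_⟩
  · simp [hs']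
  · simp [pH_uH, hr']
  · obtain ⟨y, hy⟩ := C.exists_uH_of_pH_eq_zero (x - s (C.pH n x)) (by rw [map_sub, hs', sub_self])
    simp only [LinearMap.comp_apply, LinearMap.sub_apply, LinearMap.id_apply, ← hy, hr']
    rw [hy, add_sub_cancel]

/-! ### The isomorphism `HC⁻_•(K) ≅ HH_•(K)[[u]]` -/

/-- The coefficients `x ↦ p (Tʲ x)` of the `u`-adic expansion of a class in `HC⁻ₙ(K)`. -/
def coef (C : MixedComplex k) (T : ∀ n, C.HCneg n →ₗ[k] C.HCneg (n + 2)) :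
    ∀ (j : ℕ) (n : ℤ), C.HCneg n →ₗ[k] C.HH (n + 2 * (j : ℤ))
  | 0, n => (C.hhcast (by omega)).comp (C.pH n)
  | j + 1, n => (C.hhcast (by push_cast; omega)).comp ((coef C T j (n + 2)).comp (T n))

lemma hhcast_hhcast (C : MixedComplex k) {n m p : ℤ} (h : n = m) (h' : m = p) (x : C.HH n) :
    C.hhcast h' (C.hhcast h x) = C.hhcast (h.trans h') x := by subst h; subst h'; rfl

lemma hhcast_injective (C : MixedComplex k) {n m : ℤ} (h : n = m) :
    Function.Injective (C.hhcast h) := by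
  subst h; exact fun _ _ h => h

/-- `HC⁻_•(K)` is `u`-adically separated: a graded subset `S` with `S ⊆ u S` is zero. -/
lemma eq_zero_of_divisible (C : MixedComplex k) (S : ∀ n, Set (C.HCneg n))
    (hS : ∀ n, ∀ x ∈ S n, ∃ y ∈ S (n + 2), C.uH n y = x) (n : ℤ) (x : C.HCneg n) (hx : x ∈ S n) :
    x = 0 := by
  -- cycles whose class lies in `S`
  let A : ℤ → Type _ := fun n => {z : C.NC n // ∃ hz : z ∈ C.cyc n, C.cls z hz ∈ S n}
  have hA : ∀ n (a : A n), ∃ (a' : A (n + 2)) (w : C.NC (n + 1)),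
      a.1 = C.uu rfl a'.1 + C.dd rfl w := by
    rintro n ⟨z, hz, hzS⟩
    obtain ⟨y, hy, hyz⟩ := hS n _ hzS
    obtain ⟨z', hz', rfl⟩ := C.exists_cls y
    rw [uH_cls, eq_comm, cls_eq] at hyz
    obtain ⟨w, hw⟩ := hyz
    exact ⟨⟨z', hz', hy⟩, w, by rw [hw]; simp⟩
  choose next w hnw using hA
  obtain ⟨W, hW⟩ := C.exists_sol next (fun n => n + 1) (fun n => by omega) w
  obtain ⟨z, hz, rfl⟩ := C.exists_cls x
  have key := C.sol_eq_zero next (fun n => n) (fun n => rfl)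
    (fun n a => a.1 - C.dd rfl (W n a)) (fun n a => by
      rw [hW, map_add, C.dd_uu _ rfl rfl rfl, map_sub]
      nth_rewrite 1 [hnw n a]
      abel) n ⟨z, hz, hx⟩
  rw [cls_eq_zero]
  exact ⟨_, (sub_eq_zero.1 key).symm⟩

/-- `HC⁻_•(K)` is `u`-adically complete: the recursion `X a = y a + u · X (next a)` has a
solution. -/
lemma exists_expansion (C : MixedComplex k) {A : ℤ → Type*} (next : ∀ n, A n → A (n + 2))
    (y : ∀ n, A n → C.HCneg n) :
    ∃ X : ∀ n, A n → C.HCneg n, ∀ n a, X n a = y n a + C.uH n (X (n + 2) (next n a)) := by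
  choose c hc hcy using fun n (a : A n) => C.exists_cls (y n a)
  obtain ⟨z, hz⟩ := C.exists_sol next (fun n => n) (fun n => rfl) c
  have hzc : ∀ n a, z n a ∈ C.cyc n := by
    intro n a
    rw [C.mem_cyc (by omega : n = n - 1 + 1)]
    refine C.sol_eq_zero next (fun n => n - 1) (fun n => by omega)
      (fun n a => C.dd (by omega) (z n a)) (fun n a => ?_) n a
    have h0 := (C.mem_cyc (by omega : n = n - 1 + 1) _).1 (hc n a)
    change C.dd _ (z n a) = _
    rw [hz, map_add, h0, zero_add, C.dd_uu]
  refine ⟨fun n a => C.cls (z n a) (hzc n a), fun n a => ?_⟩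
  rw [← hcy, uH_cls]
  change C.cls (z n a) _ = C.cls (c n a + C.uu rfl (z (n + 2) (next n a))) _
  congr 1
  exact hz n a

lemma exists_equiv (C : MixedComplex k) (hδ : ∀ n, C.delta n = 0) :
    ∃ e : ∀ n : ℤ, C.HCneg n ≃ₗ[k] C.HHgr n,
      ∀ (n : ℤ) (x : C.HCneg (n + 2)), e n (C.uH n x) = C.uHHgr n (e (n + 2) x) := by
  choose s T hps hTs hTu hdec using C.exists_splitting hδ
  let E : ∀ n, C.HCneg n →ₗ[k] C.HHgr n := fun n => LinearMap.pi fun j => C.coef T j n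
  have hinj : ∀ n, Function.Injective (E n) := by
    intro n
    rw [injective_iff_map_eq_zero]
    refine C.eq_zero_of_divisible (fun n => {x | E n x = 0}) (fun n x hx => ?_) n
    have hc : ∀ j, C.coef T j n x = 0 := fun j => congrFun hx j
    have hp : C.pH n x = 0 := C.hhcast_injective (by omega) ((hc 0).trans (map_zero _).symm)
    refine ⟨T n x, ?_, ?_⟩
    · funext j
      exact C.hhcast_injective (by push_cast; omega) ((hc (j + 1)).trans (map_zero _).symm)
    · have := hdec n x
      rw [hp, map_zero, zero_add] at this
      exact this.symm
  have hsurj : ∀ n, Function.Surjective (E n) := by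
    let next : ∀ n, C.HHgr n → C.HHgr (n + 2) := fun n h j =>
      C.hhcast (by push_cast; omega) (h (j + 1))
    obtain ⟨X, hX⟩ := C.exists_expansion (A := C.HHgr) next
      (fun n h => s n (C.hhcast (by omega) (h 0)))
    have hT : ∀ n h, T n (X n h) = X (n + 2) (next n h) := by
      intro n h
      rw [hX, map_add, hTs, hTu, zero_add]
    have hcoef : ∀ (j : ℕ) n (h : C.HHgr n), C.coef T j n (X n h) = h j := by
      intro j
      induction j with
      | zero =>
        intro n h
        change C.hhcast _ (C.pH n (X n h)) = h 0
        rw [hX, map_add, hps, pH_uH, add_zero, hhcast_hhcast]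
        rfl
      | succ j ih =>
        intro n h
        change C.hhcast _ (C.coef T j (n + 2) (T n (X n h))) = h (j + 1)
        rw [hT, ih, hhcast_hhcast]
        rfl
    exact fun n h => ⟨X n h, funext fun j => hcoef j n h⟩
  refine ⟨fun n => LinearEquiv.ofBijective (E n) ⟨hinj n, hsurj n⟩, fun n x => ?_⟩
  funext j
  cases j with
  | zero =>
    change C.hhcast _ (C.pH n (C.uH n x)) = 0
    rw [pH_uH, map_zero]
  | succ j =>
    change C.hhcast _ (C.coef T j (n + 2) (T n (C.uH n x))) =
      C.hhcast _ (C.coef T j (n + 2) x)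
    rw [hTu]

lemma uHHgr_injective (C : MixedComplex k) (n : ℤ) : Function.Injective (C.uHHgr n) := by
  intro x y hxy
  funext j
  exact C.hhcast_injective _ (congrFun hxy (j + 1))

end MixedComplex

open MixedComplex in
/-- Let `k` be a field and `(K, b, B)` a mixed complex over `k`.
The connecting homomorphism `δ : HHₙ(K) → HC⁻_{n+1}(K)` vanishes for every `n` if and
only if there exists an isomorphism of graded `k[u]`-modules `HC⁻_•(K) ≅ HH_•(K)[[u]]`,
i.e. a family of degreewise `k`-linear isomorphisms commuting with the action of `u`
(on `HC⁻_•(K)` the `u`-action is induced by multiplication by `u` on `K[[u]]`, and on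
`HH_•(K)[[u]]ₘ = ∏_{j≥0} HH_{m+2j}(K)` it is the canonical shift dropping the `j = 0`
component). -/
theorem statement3 {k : Type u} [Field k] (C : MixedComplex k) :
    (∀ n : ℤ, C.delta n = 0) ↔
      ∃ e : ∀ n : ℤ, C.HCneg n ≃ₗ[k] C.HHgr n,
        ∀ (n : ℤ) (x : C.HCneg (n + 2)), e n (C.uH n x) = C.uHHgr n (e (n + 2) x) := by
  refine ⟨C.exists_equiv, ?_⟩
  rintro ⟨e, he⟩
  refine C.delta_eq_zero_of_injective fun n x y hxy => ?_
  apply (e (n + 2)).injective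
  apply C.uHHgr_injective n
  rw [← he, ← he, hxy]
end

section
/- Let k be a field and A a unital associative k-algebra. Then the canonical degreewise projection from the Hochschild complex C_•(A), with C_n(A) = A ⊗ A^{⊗n} and Hochschild differential b, to the reduced Hochschild complex C^red_•(A) is a quasi-isomorphism, i.e. it induces an isomorphism on homology in every degree. -/
/-!
The projection is a surjective chain map whose kernel is the span of the degenerate chains, those
with a `1` among the entries in positions `1, …, n` (`mem_of_projMap`, via a linear section of
`A → Ā`). It therefore suffices that this degenerate subcomplex is acyclic (`degSub_acyclic`).

Filter it by the subcomplexes `degSub p` spanned by the pure tensors with a `1` in one of the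
positions `1, …, p`. On `degSub (p + 1)` the degeneracy `s_p`, which inserts a `1` at position
`p + 1`, satisfies `b s_p + s_p b ≡ (-1)^p` modulo `degSub p` (`homotopy_mem`): among the faces
of `s_p v` with `v_{p+1} = 1`, those of index `< p` lie in `degSub p`, those of index `p`, `p + 1`
and `p + 2` all equal `v`, and the remaining ones cancel against the faces in `s_p b`. A cycle in
`degSub (p + 1)` is thus homologous to one in `degSub p`, and descending to `degSub 0 = 0` shows
that it is a boundary of a degenerate chain.
-/

open scoped TensorProduct
open PiTensorProduct

universe u

/-- `Ā = A / (k · 1_A)`, the underlying `k`-vector space of `A` modulo scalars. -/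
abbrev RedQuot (k : Type u) [Field k] (A : Type u) [Ring A] [Algebra k A] :=
  A ⧸ (Submodule.span k {(1 : A)})

/-- The canonical projection `A → Ā`. -/
def redPr (k : Type u) [Field k] (A : Type u) [Ring A] [Algebra k A] :
    A →ₗ[k] RedQuot k A :=
  Submodule.mkQ _

/-- The reduced Hochschild chains `C^red_n(A) = A ⊗ Ā^{⊗n}` (tensor products over `k`). -/
abbrev CRed (k : Type u) [Field k] (A : Type u) [Ring A] [Algebra k A] (n : ℕ) :=
  A ⊗[k] (⨂[k]^n (RedQuot k A))

/-- The unreduced Hochschild chains `C_n(A) = A ⊗ A^{⊗n}` (tensor products over `k`). -/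
abbrev CUn (k : Type u) [Field k] (A : Type u) [Ring A] [Algebra k A] (n : ℕ) :=
  A ⊗[k] (⨂[k]^n A)

variable (k : Type u) [Field k]

/-- The property of being the Hochschild differential of the reduced Hochschild complex
`C^red_•(A)`:
`b(a₀ ⊗ a₁ ⊗ ⋯ ⊗ aₘ) = ∑_{i=0}^{m-1} (-1)^i a₀ ⊗ ⋯ ⊗ aᵢ·aᵢ₊₁ ⊗ ⋯ ⊗ aₘ
  + (-1)^m aₘ·a₀ ⊗ a₁ ⊗ ⋯ ⊗ a_{m-1}`,
required for all lifts `a` of the classes in `Ā`; this quantification over lifts encodes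
exactly the well-definedness of the descent of `b` to the reduced complex. -/
def IsRedHochschildDiff (A : Type u) [Ring A] [Algebra k A]
    (b : ∀ n : ℕ, CRed k A (n + 1) →ₗ[k] CRed k A n) : Prop :=
  ∀ (n : ℕ) (x₀ : A) (a : Fin (n + 1) → A),
    b n (x₀ ⊗ₜ[k] tprod k (fun j => redPr k A (a j))) =
      (x₀ * a 0) ⊗ₜ[k] tprod k (fun j : Fin n => redPr k A (a j.succ))
      + (∑ i : Fin n, ((-1 : k) ^ ((i : ℕ) + 1)) •
          (x₀ ⊗ₜ[k] tprod k (fun j : Fin n => redPr k A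
            (if (j : ℕ) < (i : ℕ) then a j.castSucc
             else if (j : ℕ) = (i : ℕ) then a i.castSucc * a i.succ
             else a j.succ))))
      + ((-1 : k) ^ (n + 1)) •
          ((a (Fin.last n) * x₀) ⊗ₜ[k] tprod k (fun j : Fin n => redPr k A (a j.castSucc)))

/-- The property of being the Connes operator `B` of the reduced Hochschild complex:
`B(a₀ ⊗ ⋯ ⊗ aₙ) = ∑_{i=0}^{n} (-1)^{n·i} 1 ⊗ aᵢ ⊗ ⋯ ⊗ aₙ ⊗ a₀ ⊗ ⋯ ⊗ a_{i-1}`,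
again required for all lifts. -/
def IsConnesOp (A : Type u) [Ring A] [Algebra k A]
    (Bop : ∀ n : ℕ, CRed k A n →ₗ[k] CRed k A (n + 1)) : Prop :=
  ∀ (n : ℕ) (x₀ : A) (a : Fin n → A),
    Bop n (x₀ ⊗ₜ[k] tprod k (fun j => redPr k A (a j))) =
      ∑ i : Fin (n + 1), ((-1 : k) ^ (n * (i : ℕ))) •
        ((1 : A) ⊗ₜ[k] tprod k (fun j : Fin (n + 1) =>
          redPr k A ((Fin.cons x₀ a : Fin (n + 1) → A) (i + j))))

/-- The property of being the Hochschild differential of the (unreduced) Hochschild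
complex `C_•(A)`, `C_n(A) = A ⊗ A^{⊗n}`, with the same formula as in the reduced case. -/
def IsHochschildDiff (A : Type u) [Ring A] [Algebra k A]
    (b : ∀ n : ℕ, CUn k A (n + 1) →ₗ[k] CUn k A n) : Prop :=
  ∀ (n : ℕ) (x₀ : A) (a : Fin (n + 1) → A),
    b n (x₀ ⊗ₜ[k] tprod k a) =
      (x₀ * a 0) ⊗ₜ[k] tprod k (fun j : Fin n => a j.succ)
      + (∑ i : Fin n, ((-1 : k) ^ ((i : ℕ) + 1)) •
          (x₀ ⊗ₜ[k] tprod k (fun j : Fin n =>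
            (if (j : ℕ) < (i : ℕ) then a j.castSucc
             else if (j : ℕ) = (i : ℕ) then a i.castSucc * a i.succ
             else a j.succ))))
      + ((-1 : k) ^ (n + 1)) •
          ((a (Fin.last n) * x₀) ⊗ₜ[k] tprod k (fun j : Fin n => a j.castSucc))

/-- The canonical degreewise projection `C_n(A) → C^red_n(A)` induced by `A → Ā`. -/
noncomputable def projMap (A : Type u) [Ring A] [Algebra k A] (n : ℕ) :
    CUn k A n →ₗ[k] CRed k A n :=
  TensorProduct.map LinearMap.id (PiTensorProduct.map (fun _ : Fin n => redPr k A))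

namespace HochRed

variable {k} {A : Type u} [Ring A] [Algebra k A]

/-- The pure tensor `v₀ ⊗ (v₁ ⊗ ⋯ ⊗ vₙ)` in `C_n(A)`. Entries are read off an infinite sequence,
of which only the first `n + 1` terms matter; this keeps all index arithmetic in `ℕ`. -/
noncomputable def pureT (k : Type u) [Field k] {A : Type u} [Ring A] [Algebra k A]
    (n : ℕ) (v : ℕ → A) : CUn k A n :=
  v 0 ⊗ₜ[k] tprod k (fun j : Fin n => v (j + 1))

lemma pureT_congr {n : ℕ} {v w : ℕ → A} (h : ∀ j ≤ n, v j = w j) :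
    pureT k n v = pureT k n w := by
  unfold pureT
  rw [h 0 (Nat.zero_le _)]
  congr 2
  funext j
  exact h _ j.2

/-- The `i`-th face of a string `v₀, …, vₙ₊₁` (for `i ≤ n + 1`): multiply the entries `i` and
`i + 1`, cyclically for `i = n + 1`. -/
def face (n i : ℕ) (v : ℕ → A) : ℕ → A := fun j =>
  if i = n + 1 then (if j = 0 then v (n + 1) * v 0 else v j)
  else if j < i then v j else if j = i then v i * v (i + 1) else v (j + 1)

/-- The degeneracy `s_p`, inserting `1` as the new entry number `p + 1`. -/
def degen (p : ℕ) (v : ℕ → A) : ℕ → A := fun j =>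
  if j ≤ p then v j else if j = p + 1 then 1 else v (j - 1)

lemma exists_pureT {n : ℕ} (x₀ : A) (a : Fin n → A) :
    ∃ v : ℕ → A, x₀ ⊗ₜ[k] tprod k a = pureT k n v ∧ ∀ j : Fin n, v (j + 1) = a j := by
  refine ⟨fun j => if j = 0 then x₀ else if h : j - 1 < n then a ⟨j - 1, h⟩ else 0, ?_, ?_⟩
  · simp [pureT]
  · simp

lemma pureT_induction {n : ℕ} (P : CUn k A n → Prop) (hT : ∀ v, P (pureT k n v))
    (hadd : ∀ x y, P x → P y → P (x + y)) (hsmul : ∀ (c : k) x, P x → P (c • x)) (x) : P x := by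
  have h0 : P 0 := by simpa using hsmul 0 _ (hT 0)
  induction x using TensorProduct.induction_on with
  | zero => exact h0
  | add x y hx hy => exact hadd _ _ hx hy
  | tmul x₀ t =>
    induction t using PiTensorProduct.induction_on with
    | smul_tprod r a =>
      obtain ⟨v, hv, -⟩ := exists_pureT (k := k) x₀ a
      rw [TensorProduct.tmul_smul, hv]
      exact hsmul _ _ (hT v)
    | add s t hs ht =>
      rw [TensorProduct.tmul_add]
      exact hadd _ _ hs ht

lemma diff_pureT {b : ∀ n : ℕ, CUn k A (n + 1) →ₗ[k] CUn k A n} (hb : IsHochschildDiff k A b)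
    (n : ℕ) (v : ℕ → A) :
    b n (pureT k (n + 1) v) =
      ∑ i ∈ Finset.range (n + 2), (-1 : k) ^ i • pureT k n (face n i v) := by
  rw [pureT, hb, Finset.sum_range_succ, Finset.sum_range_succ', Finset.sum_range]
  rw [add_comm (Finset.sum _ _) (_ • _)]
  congr 1
  · congr 1
    · simp [pureT, face]
    · refine Finset.sum_congr rfl fun i _ => ?_
      congr 1
      have hi : (i : ℕ) ≠ n := i.2.ne
      simp [pureT, face, hi]
  · simp [pureT, face]

/-- The face identity `d_i d_{j+1} = d_j d_i` for `i ≤ j`. -/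
lemma face_face {n i j : ℕ} (hij : i ≤ j) (hj : j ≤ n + 1) (v : ℕ → A) (l : ℕ) (hl : l ≤ n) :
    face n i (face (n + 1) (j + 1) v) l = face n j (face (n + 1) i v) l := by
  unfold face
  grind

lemma diff_diff {b : ∀ n : ℕ, CUn k A (n + 1) →ₗ[k] CUn k A n} (hb : IsHochschildDiff k A b)
    (n : ℕ) (x : CUn k A (n + 2)) : b n (b (n + 1) x) = 0 := by
  induction x using pureT_induction with
  | hadd x y hx hy => simp [hx, hy]
  | hsmul c x hx => simp [hx]
  | hT v =>
    simp only [diff_pureT hb, map_sum, map_smul, Finset.smul_sum, smul_smul, ← pow_add]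
    rw [← Finset.sum_product']
    -- Cancel the pair `(j + 1, i)`, `i ≤ j`, against `(i, j)`.
    refine Finset.sum_involution
      (fun q _ => if q.2 < q.1 then (q.2, q.1 - 1) else (q.2 + 1, q.1)) ?_ ?_ ?_ ?_
    · rintro ⟨j, i⟩ hq
      simp only [Finset.mem_product, Finset.mem_range] at hq
      dsimp only
      split_ifs with h
      · obtain ⟨j, rfl⟩ : ∃ j', j = j' + 1 := ⟨j - 1, by omega⟩
        rw [pureT_congr (face_face (by omega) (by omega) v), Nat.add_sub_cancel, ← add_smul]
        ring_nf
        simp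
      · rw [← pureT_congr (face_face (by omega) (by omega) v), ← add_smul]
        ring_nf
        simp
    · rintro ⟨j, i⟩ hq _ h
      dsimp only at h
      split_ifs at h <;> simp only [Prod.mk.injEq] at h <;> omega
    · rintro ⟨j, i⟩ hq
      simp only [Finset.mem_product, Finset.mem_range] at hq
      dsimp only
      split_ifs <;> simp only [Finset.mem_product, Finset.mem_range] <;> omega
    · rintro ⟨j, i⟩ hq
      rcases lt_or_ge i j with h | h
      · simp [h, show ¬ j - 1 < i by omega, show j - 1 + 1 = j by omega]
      · simp [show ¬ i < j by omega, show j < i + 1 by omega]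

/-- The span of the pure tensors of degree `n` having an entry `1` at a position in `1, …, p`. -/
def degSub (k : Type u) [Field k] (A : Type u) [Ring A] [Algebra k A] (p n : ℕ) :
    Submodule k (CUn k A n) :=
  Submodule.span k {x | ∃ v : ℕ → A, ∃ j, 1 ≤ j ∧ j ≤ p ∧ j ≤ n ∧ v j = 1 ∧ x = pureT k n v}

lemma pureT_mem {p n : ℕ} {v : ℕ → A} (j : ℕ) (h1 : 1 ≤ j) (hp : j ≤ p) (hn : j ≤ n)
    (hv : v j = 1) : pureT k n v ∈ degSub k A p n :=
  Submodule.subset_span ⟨v, j, h1, hp, hn, hv, rfl⟩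

lemma degSub_zero_left (n : ℕ) : degSub k A 0 n = ⊥ := by
  refine Submodule.span_eq_bot.2 ?_
  rintro x ⟨v, j, h1, h2, -⟩
  omega

lemma degSub_zero_right (p : ℕ) : degSub k A p 0 = ⊥ := by
  refine Submodule.span_eq_bot.2 ?_
  rintro x ⟨v, j, h1, -, h2, -⟩
  omega

lemma degSub_mono {p q : ℕ} (h : p ≤ q) (n : ℕ) : degSub k A p n ≤ degSub k A q n := by
  refine Submodule.span_mono ?_
  rintro x ⟨v, j, h1, h2, h3⟩
  exact ⟨v, j, h1, h2.trans h, h3⟩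

lemma degSub_le (p n : ℕ) : degSub k A p n ≤ degSub k A n n := by
  refine Submodule.span_mono ?_
  rintro x ⟨v, j, h1, h2, h3, h4⟩
  exact ⟨v, j, h1, h3, h3, h4⟩

/-- The two faces deleting an entry `1` agree. -/
lemma face_eq_face_succ {n j : ℕ} {v : ℕ → A} (hj : j ≤ n) (hv : v (j + 1) = 1) (l : ℕ)
    (hl : l ≤ n) : face n j v l = face n (j + 1) v l := by
  unfold face
  split_ifs <;> first | omega | (subst_vars; simp_all)

lemma face_below {n i j : ℕ} {v : ℕ → A} (hi : i < j) (hj : j ≤ n) :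
    face n i v j = v (j + 1) := by
  simp [face, show i ≠ n + 1 by omega, show ¬ j < i by omega, show j ≠ i by omega]

lemma face_above {n i j : ℕ} {v : ℕ → A} (h1 : 1 ≤ j) (hi : j < i) :
    face n i v j = v j := by
  simp [face, hi]; omega

/-- Each filtration step `degSub p` is a subcomplex. -/
lemma diff_mem {b : ∀ n : ℕ, CUn k A (n + 1) →ₗ[k] CUn k A n} (hb : IsHochschildDiff k A b)
    {p n : ℕ} {x : CUn k A (n + 1)} (hx : x ∈ degSub k A p (n + 1)) :
    b n x ∈ degSub k A p n := by
  suffices degSub k A p (n + 1) ≤ (degSub k A p n).comap (b n) from this hx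
  refine Submodule.span_le.2 ?_
  rintro _ ⟨v, j, h1, hp, hn, hv, rfl⟩
  obtain ⟨j, rfl⟩ : ∃ j', j = j' + 1 := ⟨j - 1, by omega⟩
  simp only [SetLike.mem_coe, Submodule.mem_comap]
  rw [diff_pureT hb, show n + 2 = (j + 2) + (n - j) by omega, Finset.sum_range_add,
    Finset.sum_range_succ, Finset.sum_range_succ,
    pureT_congr (face_eq_face_succ (n := n) (by omega) hv)]
  have hc : (-1 : k) ^ j • pureT k n (face n (j + 1) v)
      + (-1 : k) ^ (j + 1) • pureT k n (face n (j + 1) v) = 0 := by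
    rw [← add_smul]; ring_nf; simp
  rw [add_assoc (Finset.sum _ _) _ _, hc, add_zero]
  refine Submodule.add_mem _ (Submodule.sum_mem _ fun i hi => ?_)
    (Submodule.sum_mem _ fun i hi => ?_) <;> rw [Finset.mem_range] at hi
  · refine Submodule.smul_mem _ _ (pureT_mem j (by omega) (by omega) (by omega) ?_)
    rw [face_below hi (by omega), hv]
  · refine Submodule.smul_mem _ _ (pureT_mem (j + 1) (by omega) (by omega) (by omega) ?_)
    rw [face_above (by omega) (by omega), hv]

/-- The degeneracy `s_p` as a linear map `C_n(A) → C_{n+1}(A)`. -/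
noncomputable def degenL (k : Type u) [Field k] (A : Type u) [Ring A] [Algebra k A]
    {p n : ℕ} (h : p ≤ n) : CUn k A n →ₗ[k] CUn k A (n + 1) :=
  LinearMap.lTensor A (PiTensorProduct.lift
    (MultilinearMap.curryMid (⟨p, Nat.lt_succ_of_le h⟩ : Fin (n + 1))
      (tprod k (s := fun _ : Fin (n + 1) => A)) 1))

lemma degenL_pureT {p n : ℕ} (h : p ≤ n) (v : ℕ → A) :
    degenL k A h (pureT k n v) = pureT k (n + 1) (degen p v) := by
  simp only [degenL, pureT, LinearMap.lTensor_tmul, PiTensorProduct.lift.tprod,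
    MultilinearMap.curryMid_apply_apply]
  congr 2
  funext j
  refine Fin.succAboveCases ⟨p, Nat.lt_succ_of_le h⟩ ?_ (fun i => ?_) j
  · simp [degen]
  · rw [Fin.insertNth_apply_succAbove]
    rcases lt_or_ge (i : ℕ) p with hi | hi
    · rw [Fin.succAbove_of_castSucc_lt _ _ (by simpa [Fin.lt_def] using hi)]
      simp [degen, hi]
    · rw [Fin.succAbove_of_le_castSucc _ _ (by simpa [Fin.le_def] using hi)]
      simp [degen, show ¬ (i : ℕ) + 1 + 1 ≤ p by omega, show (i : ℕ) + 1 ≠ p by omega]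

lemma degenL_mem {p q n : ℕ} (h : p ≤ n) (hq : q ≤ p + 1) {x : CUn k A n}
    (hx : x ∈ degSub k A q n) : degenL k A h x ∈ degSub k A q (n + 1) := by
  suffices degSub k A q n ≤ (degSub k A q (n + 1)).comap (degenL k A h) from this hx
  refine Submodule.span_le.2 ?_
  rintro _ ⟨v, j, h1, hp, hn, hv, rfl⟩
  simp only [SetLike.mem_coe, Submodule.mem_comap]
  rw [degenL_pureT]
  refine pureT_mem j h1 hp (by omega) ?_
  simp only [degen, hv]
  split_ifs
  · rfl
  · rfl
  · omega

lemma face_degen {p n i : ℕ} (hi : p + 1 < i) (hn : i ≤ n + 1) (v : ℕ → A) (l : ℕ) :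
    face (n + 1) (i + 1) (degen p v) l = degen p (face n i v) l := by
  unfold face degen
  grind

lemma face_degen_self {p n : ℕ} (hn : p ≤ n) (v : ℕ → A) (l : ℕ) :
    face (n + 1) p (degen p v) l = v l := by
  unfold face degen
  split_ifs <;> first | omega | (subst_vars; simp_all)

/-- Modulo `degSub p`, the operator `(-1)^p s_p` is a contracting homotopy of `degSub (p + 1)`. -/
lemma homotopy_mem {b : ∀ n : ℕ, CUn k A (n + 1) →ₗ[k] CUn k A n}
    (hb : IsHochschildDiff k A b) {p m : ℕ} (h : p ≤ m) {x : CUn k A (m + 1)}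
    (hx : x ∈ degSub k A (p + 1) (m + 1)) :
    b (m + 1) (degenL k A (h.trans m.le_succ) x) + degenL k A h (b m x) - (-1 : k) ^ p • x
      ∈ degSub k A p (m + 1) := by
  suffices degSub k A (p + 1) (m + 1) ≤ (degSub k A p (m + 1)).comap
      (b (m + 1) ∘ₗ degenL k A (h.trans m.le_succ) + degenL k A h ∘ₗ b m
        - (-1 : k) ^ p • LinearMap.id) from this hx
  refine Submodule.span_le.2 ?_
  rintro _ ⟨v, j, h1, hp, hn, hv, rfl⟩
  simp only [SetLike.mem_coe, Submodule.mem_comap, LinearMap.sub_apply, LinearMap.add_apply,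
    LinearMap.comp_apply, LinearMap.smul_apply, LinearMap.id_apply]
  by_cases hjp : j ≤ p
  · have hv' : pureT k (m + 1) v ∈ degSub k A p (m + 1) := pureT_mem j h1 hjp hn hv
    exact Submodule.sub_mem _ (Submodule.add_mem _
      (diff_mem hb (degenL_mem _ (by omega) hv')) (degenL_mem _ (by omega) (diff_mem hb hv')))
      (Submodule.smul_mem _ _ hv')
  obtain rfl : j = p + 1 := by omega
  have hw1 : degen p v (p + 1) = 1 := by simp [degen]
  have hw2 : degen p v (p + 2) = 1 := by simp [degen, hv]
  rw [degenL_pureT, diff_pureT hb, diff_pureT hb]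
  simp only [map_sum, map_smul, degenL_pureT]
  -- The three faces number `p`, `p + 1`, `p + 2` of `s_p v` all return `v`.
  have e0 : pureT k (m + 1) (face (m + 1) p (degen p v)) = pureT k (m + 1) v :=
    pureT_congr fun l _ => face_degen_self h v l
  have e1 : pureT k (m + 1) (face (m + 1) (p + 1) (degen p v)) = pureT k (m + 1) v := by
    rw [← e0, pureT_congr (face_eq_face_succ (by omega) hw1)]
  have e2 : pureT k (m + 1) (face (m + 1) (p + 2) (degen p v)) = pureT k (m + 1) v := by
    rw [← e1, pureT_congr (face_eq_face_succ (j := p + 1) (by omega) hw2)]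
  have e3 : pureT k (m + 1) (degen p (face m p v))
      = pureT k (m + 1) (degen p (face m (p + 1) v)) := by
    rw [← degenL_pureT h, ← degenL_pureT h, pureT_congr (face_eq_face_succ h hv)]
  rw [show m + 1 + 2 = (p + 3) + (m - p) by omega, show m + 2 = (p + 2) + (m - p) by omega,
    Finset.sum_range_add _ (p + 3), Finset.sum_range_add _ (p + 2),
    Finset.sum_range_succ _ (p + 2), Finset.sum_range_succ _ (p + 1), Finset.sum_range_succ _ p,
    Finset.sum_range_succ _ (p + 1), Finset.sum_range_succ _ p, e0, e1, e2, e3]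
  -- The faces beyond these commute with `s_p` up to an index shift, hence cancel.
  have e4 : ∑ i ∈ Finset.range (m - p),
        (-1 : k) ^ (p + 3 + i) • pureT k (m + 1) (face (m + 1) (p + 3 + i) (degen p v))
      = - ∑ i ∈ Finset.range (m - p),
        (-1 : k) ^ (p + 2 + i) • pureT k (m + 1) (degen p (face m (p + 2 + i) v)) := by
    rw [← Finset.sum_neg_distrib]
    refine Finset.sum_congr rfl fun i hi => ?_
    rw [Finset.mem_range] at hi
    rw [← pureT_congr fun l _ => face_degen (by omega) (by omega) v l,
      show p + 3 + i = p + 2 + i + 1 by omega, pow_succ]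
    module
  have m1 : ∑ i ∈ Finset.range p,
      (-1 : k) ^ i • pureT k (m + 1) (face (m + 1) i (degen p v)) ∈ degSub k A p (m + 1) := by
    refine Submodule.sum_mem _ fun i hi => ?_
    rw [Finset.mem_range] at hi
    refine Submodule.smul_mem _ _ (pureT_mem p (by omega) le_rfl (by omega) ?_)
    rw [face_below hi (by omega), hw1]
  have m2 : ∑ i ∈ Finset.range p,
      (-1 : k) ^ i • pureT k (m + 1) (degen p (face m i v)) ∈ degSub k A p (m + 1) := by
    refine Submodule.sum_mem _ fun i hi => ?_
    rw [Finset.mem_range] at hi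
    refine Submodule.smul_mem _ _ (pureT_mem p (by omega) le_rfl (by omega) ?_)
    simp only [degen, le_refl, if_true]
    rw [face_below hi h, hv]
  rw [e4]
  convert Submodule.add_mem _ m1 m2 using 1
  simp only [pow_succ]
  module

/-- The degenerate subcomplex is acyclic: each cycle is the boundary of a degenerate chain. -/
lemma degSub_acyclic {b : ∀ n : ℕ, CUn k A (n + 1) →ₗ[k] CUn k A n}
    (hb : IsHochschildDiff k A b) (m p : ℕ) (hp : p ≤ m + 1) (x : CUn k A (m + 1))
    (hx : x ∈ degSub k A p (m + 1)) (hbx : b m x = 0) :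
    ∃ z ∈ degSub k A p (m + 2), b (m + 1) z = x := by
  induction p generalizing x with
  | zero =>
    rw [degSub_zero_left, Submodule.mem_bot] at hx
    exact ⟨0, Submodule.zero_mem _, by simp [hx]⟩
  | succ p ih =>
    have h : p ≤ m := by omega
    have key := homotopy_mem hb h hx
    set y := degenL k A (h.trans m.le_succ) x with hy
    have hyD : y ∈ degSub k A (p + 1) (m + 2) := degenL_mem _ le_rfl hx
    rw [hbx, map_zero, add_zero] at key
    obtain ⟨z, hz, hbz⟩ := ih (by omega) _ key (by simp [diff_diff hb, hbx])
    refine ⟨(-1 : k) ^ p • (y - z), Submodule.smul_mem _ _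
      (Submodule.sub_mem _ hyD (degSub_mono p.le_succ _ hz)), ?_⟩
    rw [map_smul, map_sub, hbz, sub_sub_cancel, smul_smul, ← mul_pow]
    simp

lemma projMap_pureT (n : ℕ) (v : ℕ → A) :
    projMap k A n (pureT k n v) =
      v 0 ⊗ₜ[k] tprod k (fun j : Fin n => redPr k A (v (j + 1))) := by
  simp [projMap, pureT, PiTensorProduct.map_tprod]

lemma redPr_one : redPr k A 1 = 0 :=
  (Submodule.Quotient.mk_eq_zero _).2 (Submodule.mem_span_singleton_self _)

lemma projMap_of_mem {p n : ℕ} {x : CUn k A n} (hx : x ∈ degSub k A p n) :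
    projMap k A n x = 0 := by
  suffices degSub k A p n ≤ LinearMap.ker (projMap k A n) from this hx
  refine Submodule.span_le.2 ?_
  rintro _ ⟨v, j, h1, hp, hn, hv, rfl⟩
  obtain ⟨j, rfl⟩ : ∃ j', j = j' + 1 := ⟨j - 1, by omega⟩
  rw [SetLike.mem_coe, LinearMap.mem_ker, projMap_pureT,
    MultilinearMap.map_coord_zero (tprod k) (⟨j, by omega⟩ : Fin n) (by simp [hv, redPr_one]),
    TensorProduct.tmul_zero]

lemma exists_section :
    ∃ σ : RedQuot k A →ₗ[k] A, ∀ y, redPr k A (σ y) = y := by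
  obtain ⟨σ, hσ⟩ := LinearMap.exists_rightInverse_of_surjective (redPr k A)
    (LinearMap.range_eq_top.2 (Submodule.mkQ_surjective _))
  exact ⟨σ, fun y => LinearMap.congr_fun hσ y⟩

/-- Changing entries by multiples of `1` does not change a tensor modulo degenerate ones. -/
lemma tmul_sub_mem {n : ℕ} (x₀ : A) (a a' : Fin n → A)
    (h : ∀ j, ∃ c : k, a j = a' j + c • (1 : A)) :
    x₀ ⊗ₜ[k] tprod k a - x₀ ⊗ₜ[k] tprod k a' ∈ degSub k A n n := by
  suffices H : ∀ s : Finset (Fin n),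
      x₀ ⊗ₜ[k] tprod k (s.piecewise a a') - x₀ ⊗ₜ[k] tprod k a' ∈ degSub k A n n by
    simpa using H Finset.univ
  intro s
  induction s using Finset.induction_on with
  | empty => simp
  | insert j s hj ih =>
    obtain ⟨c, hc⟩ := h j
    have hs : Function.update (s.piecewise a a') j (a' j) = s.piecewise a a' := by
      rw [Function.update_eq_self_iff, Finset.piecewise_eq_of_notMem _ _ _ hj]
    rw [Finset.piecewise_insert, hc, MultilinearMap.map_update_add, hs,
      MultilinearMap.map_update_smul, TensorProduct.tmul_add, TensorProduct.tmul_smul,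
      add_sub_right_comm]
    refine Submodule.add_mem _ ih (Submodule.smul_mem _ _ ?_)
    obtain ⟨v, hv, hv'⟩ := exists_pureT (k := k) x₀ (Function.update (s.piecewise a a') j 1)
    rw [hv]
    exact pureT_mem (j + 1) (by omega) j.2 j.2 (by rw [hv']; simp)

/-- The kernel of the projection consists of degenerate chains. With `σ` a linear section of
`A → Ā`, a chain `x` differs from its image under `σ ∘ redPr` (applied to all but the leading
factor) by a degenerate chain, and that image vanishes on the kernel. -/
lemma mem_of_projMap {n : ℕ} {x : CUn k A n} (hx : projMap k A n x = 0) :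
    x ∈ degSub k A n n := by
  obtain ⟨σ, hσ⟩ := exists_section (k := k) (A := A)
  let τ : CRed k A n →ₗ[k] CUn k A n :=
    TensorProduct.map LinearMap.id (PiTensorProduct.map (fun _ : Fin n => σ))
  have H : ∀ x : CUn k A n, x - τ (projMap k A n x) ∈ degSub k A n n := by
    intro x
    induction x using pureT_induction with
    | hadd x y hx hy =>
      rw [map_add, map_add, add_sub_add_comm]
      exact Submodule.add_mem _ hx hy
    | hsmul c x hx =>
      convert Submodule.smul_mem _ c hx using 1
      rw [map_smul, map_smul]
      module
    | hT v =>
      rw [projMap_pureT]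
      simp only [τ, TensorProduct.map_tmul, PiTensorProduct.map_tprod, LinearMap.id_apply, pureT]
      refine tmul_sub_mem _ _ _ fun j => ?_
      have : v (j + 1) - σ (redPr k A (v (j + 1))) ∈ Submodule.span k {(1 : A)} := by
        rw [← Submodule.Quotient.mk_eq_zero]
        change redPr k A _ = 0
        rw [map_sub, hσ, sub_self]
      obtain ⟨c, hc⟩ := Submodule.mem_span_singleton.1 this
      exact ⟨c, by rw [hc]; abel⟩
  simpa [hx] using H x

lemma projMap_surjective (n : ℕ) : Function.Surjective (projMap k A n) := by
  obtain ⟨σ, hσ⟩ := exists_section (k := k) (A := A)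
  intro y
  refine ⟨TensorProduct.map LinearMap.id (PiTensorProduct.map (fun _ : Fin n => σ)) y, ?_⟩
  have hc : redPr k A ∘ₗ σ = LinearMap.id := LinearMap.ext hσ
  rw [projMap, ← LinearMap.comp_apply, ← TensorProduct.map_comp, ← PiTensorProduct.map_comp]
  simp [hc]

lemma projMap_diff {b : ∀ n : ℕ, CUn k A (n + 1) →ₗ[k] CUn k A n}
    (hb : IsHochschildDiff k A b) {br : ∀ n : ℕ, CRed k A (n + 1) →ₗ[k] CRed k A n}
    (hbr : IsRedHochschildDiff k A br) (n : ℕ) (x : CUn k A (n + 1)) :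
    projMap k A n (b n x) = br n (projMap k A (n + 1) x) := by
  induction x using pureT_induction with
  | hadd x y hx hy => simp [hx, hy]
  | hsmul c x hx => simp [hx]
  | hT v =>
    rw [projMap_pureT, hbr n (v 0) (fun j => v (j + 1)), pureT, hb]
    simp [projMap, PiTensorProduct.map_tprod]

end HochRed

/-- Let `k` be a field and `A` a unital associative `k`-algebra.  The
canonical degreewise projection from the Hochschild complex `C_•(A)` to the reduced
Hochschild complex `C^red_•(A)` is a chain map and a quasi-isomorphism: it induces an
isomorphism on homology in every degree (injectivity and surjectivity of the induced map
on homology are spelled out at the level of cycles and boundaries, in degree `0` and in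
degrees `n + 1`). -/
theorem statement5 (A : Type u) [Ring A] [Algebra k A]
    (bun : ∀ n : ℕ, CUn k A (n + 1) →ₗ[k] CUn k A n) (hun : IsHochschildDiff k A bun)
    (bred : ∀ n : ℕ, CRed k A (n + 1) →ₗ[k] CRed k A n)
    (hred : IsRedHochschildDiff k A bred) :
    -- the projection is a chain map
    (∀ (n : ℕ) (x : CUn k A (n + 1)),
      projMap k A n (bun n x) = bred n (projMap k A (n + 1) x)) ∧
    -- surjectivity on `H₀`
    (∀ y : CRed k A 0, ∃ x : CUn k A 0,
      projMap k A 0 x - y ∈ LinearMap.range (bred 0)) ∧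
    -- injectivity on `H₀`
    (∀ x : CUn k A 0,
      projMap k A 0 x ∈ LinearMap.range (bred 0) → x ∈ LinearMap.range (bun 0)) ∧
    -- surjectivity on `H_{n+1}`
    (∀ (n : ℕ) (y : CRed k A (n + 1)), bred n y = 0 →
      ∃ x : CUn k A (n + 1), bun n x = 0 ∧
        projMap k A (n + 1) x - y ∈ LinearMap.range (bred (n + 1))) ∧
    -- injectivity on `H_{n+1}`
    (∀ (n : ℕ) (x : CUn k A (n + 1)), bun n x = 0 →
      projMap k A (n + 1) x ∈ LinearMap.range (bred (n + 1)) →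
        x ∈ LinearMap.range (bun (n + 1))) := by
  have hpr := HochRed.projMap_diff hun hred
  refine ⟨hpr, fun y => ?_, fun x hx => ?_, fun n y hy => ?_, fun n x hx hx' => ?_⟩
  · obtain ⟨x, rfl⟩ := HochRed.projMap_surjective 0 y
    exact ⟨x, by simp⟩
  · obtain ⟨y, hy⟩ := hx
    obtain ⟨y, rfl⟩ := HochRed.projMap_surjective 1 y
    have h : x - bun 0 y ∈ HochRed.degSub k A 0 0 :=
      HochRed.mem_of_projMap (by rw [map_sub, hpr, hy, sub_self])
    rw [HochRed.degSub_zero_left, Submodule.mem_bot, sub_eq_zero] at h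
    exact ⟨y, h.symm⟩
  · obtain ⟨x, rfl⟩ := HochRed.projMap_surjective (n + 1) y
    rw [← hpr] at hy
    have hD := HochRed.mem_of_projMap hy
    -- Correct the lift `x` by a degenerate `z` with the same boundary.
    obtain ⟨z, hz, hbz⟩ : ∃ z ∈ HochRed.degSub k A n (n + 1), bun n z = bun n x := by
      cases n with
      | zero =>
        rw [HochRed.degSub_zero_left, Submodule.mem_bot] at hD
        exact ⟨0, Submodule.zero_mem _, by rw [hD, map_zero]⟩
      | succ m =>
        exact HochRed.degSub_acyclic hun m _ le_rfl _ hD (HochRed.diff_diff hun m x)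
    refine ⟨x - z, by rw [map_sub, hbz, sub_self], ?_⟩
    rw [map_sub, HochRed.projMap_of_mem hz, sub_zero, sub_self]
    exact Submodule.zero_mem _
  · obtain ⟨y, hy⟩ := hx'
    obtain ⟨y, rfl⟩ := HochRed.projMap_surjective (n + 2) y
    have h : x - bun (n + 1) y ∈ HochRed.degSub k A (n + 1) (n + 1) :=
      HochRed.mem_of_projMap (by rw [map_sub, hpr, hy, sub_self])
    obtain ⟨z, -, hz⟩ := HochRed.degSub_acyclic hun n _ le_rfl _ h
      (by rw [map_sub, hx, HochRed.diff_diff hun, sub_zero])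
    exact ⟨z + y, by rw [map_add, hz, sub_add_cancel]⟩
end
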